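/- Suppose A is a ℤ-graded ℂ-algebra with finite-dimensional graded pieces satisfying A^i = 0 for i < c, and M is a graded A-module with finite-dimensional graded pieces satisfying M^i = 0 for i < b. Then M admits a minimal graded projective resolution ⋯ → P_k → ⋯ → P_1 → P_0 → M → 0 such that for every k ≥ 0, the k-th term satisfies P_k^i = 0 for all i < b + (k+1)c, and every P_k has finite-dimensional graded pieces. -/

import Mathlib

/-- A graded module over the ℤ-graded ℂ-algebra `(A, 𝒜)`. -/
structure GModule (A : Type) [Ring A] [Algebra ℂ A] (𝒜 : ℤ → Submodule ℂ A) where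
  carrier : Type
  [acg : AddCommGroup carrier]
  [modC : Module ℂ carrier]
  [modA : Module A carrier]
  [tower : IsScalarTower ℂ A carrier]
  grading : ℤ → Submodule ℂ carrier
  [gsmul : SetLike.GradedSMul 𝒜 grading]
  [decomp : DirectSum.Decomposition grading]

attribute [instance] GModule.acg GModule.modC GModule.modA GModule.tower
  GModule.gsmul GModule.decomp

variable {A : Type} [Ring A] [Algebra ℂ A] {𝒜 : ℤ → Submodule ℂ A}

/-- A graded `A`-submodule of a graded module. -/
def GModule.IsGradedSub (M : GModule A 𝒜) (N : Submodule A M.carrier) : Prop :=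
  ∀ (i : ℤ) (m : M.carrier), m ∈ N →
    (DirectSum.decompose M.grading m i : M.carrier) ∈ N

/-- The graded radical: the intersection of all maximal proper graded submodules;
the head of `M` is `M` modulo this radical.  A projective resolution is minimal
exactly when the image of each differential (and the kernel of the augmentation)
lies in the graded radical. -/
noncomputable def GModule.gradedRad (M : GModule A 𝒜) : Submodule A M.carrier :=
  sInf {N' : Submodule A M.carrier | M.IsGradedSub N' ∧ N' ≠ ⊤ ∧
    ∀ N'' : Submodule A M.carrier, M.IsGradedSub N'' → N' ≤ N'' → N'' = N' ∨ N'' = ⊤}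

theorem gm_isInternal {V : Type} [AddCommGroup V] [Module ℂ V] (G : ℤ → Submodule ℂ V)
    (π : ℤ → V →ₗ[ℂ] V) (h1 : ∀ i, ∀ x ∈ G i, π i x = x)
    (h2 : ∀ i j, j ≠ i → ∀ x ∈ G j, π i x = 0) (h3 : ∀ x, x ∈ ⨆ i, G i) :
    DirectSum.IsInternal G := by
  rw [DirectSum.isInternal_submodule_iff_iSupIndep_and_iSup_eq_top]
  refine ⟨?_, eq_top_iff.2 fun x _ => h3 x⟩
  intro i
  rw [Submodule.disjoint_def]
  intro x hx hx'
  have : (⨆ j, ⨆ (_ : j ≠ i), G j) ≤ LinearMap.ker (π i) :=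
    iSup_le fun j => iSup_le fun hj => fun y hy => h2 i j hj y hy
  rw [← h1 i x hx]
  exact this hx'

/-- The projection of a graded module to its `i`-th piece. -/
noncomputable def GModule.pr (M : GModule A 𝒜) (i : ℤ) : M.carrier →ₗ[ℂ] M.carrier :=
  (M.grading i).subtype ∘ₗ (DirectSum.component ℂ ℤ (fun i => M.grading i) i) ∘ₗ
    (DirectSum.decomposeLinearEquiv M.grading).toLinearMap

theorem GModule.pr_apply (M : GModule A 𝒜) (i : ℤ) (x : M.carrier) :
    M.pr i x = (DirectSum.decompose M.grading x i : M.carrier) := rfl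

theorem GModule.pr_mem (M : GModule A 𝒜) (i : ℤ) (x : M.carrier) :
    M.pr i x ∈ M.grading i := (DirectSum.decompose M.grading x i).2

theorem GModule.pr_same (M : GModule A 𝒜) (i : ℤ) (x : M.carrier) (hx : x ∈ M.grading i) :
    M.pr i x = x := DirectSum.decompose_of_mem_same _ hx

theorem GModule.pr_ne (M : GModule A 𝒜) (i j : ℤ) (h : j ≠ i) (x : M.carrier)
    (hx : x ∈ M.grading j) : M.pr i x = 0 := DirectSum.decompose_of_mem_ne _ hx h

theorem GModule.sum_pr (M : GModule A 𝒜) (x : M.carrier) :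
    ∃ s : Finset ℤ, x = ∑ i ∈ s, M.pr i x := by
  classical
  exact ⟨_, (DirectSum.sum_support_decompose M.grading x).symm⟩

theorem GModule.ext_pr (M : GModule A 𝒜) (x : M.carrier) (h : ∀ i, M.pr i x = 0) : x = 0 := by
  obtain ⟨s, hs⟩ := M.sum_pr x
  rw [hs]; exact Finset.sum_eq_zero fun i _ => h i

/-- A degree zero map commutes with projections. -/
theorem GModule.map_pr (M N : GModule A 𝒜) (f : M.carrier →ₗ[A] N.carrier)
    (hf : ∀ i, ∀ x ∈ M.grading i, f x ∈ N.grading i) (i : ℤ) (x : M.carrier) :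
    N.pr i (f x) = f (M.pr i x) := by
  obtain ⟨s, hs⟩ := M.sum_pr x
  have key : ∀ j, N.pr i (f (M.pr j x)) = f (M.pr i (M.pr j x)) := by
    intro j
    by_cases h : j = i
    · subst h
      rw [M.pr_same _ _ (M.pr_mem _ _), N.pr_same _ _ (hf _ _ (M.pr_mem _ _))]
    · rw [M.pr_ne i j h _ (M.pr_mem _ _), N.pr_ne i j h _ (hf _ _ (M.pr_mem _ _)), map_zero]
  calc N.pr i (f x) = N.pr i (f (∑ j ∈ s, M.pr j x)) := by rw [← hs]
    _ = f (M.pr i (∑ j ∈ s, M.pr j x)) := by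
        simp only [map_sum]; exact Finset.sum_congr rfl fun j _ => key j
    _ = _ := by rw [← hs]

theorem GModule.isGradedSub_iff (M : GModule A 𝒜) (N : Submodule A M.carrier) :
    M.IsGradedSub N ↔ ∀ i, ∀ m ∈ N, M.pr i m ∈ N := Iff.rfl

theorem GModule.IsGradedSub.ker {M N : GModule A 𝒜} (f : M.carrier →ₗ[A] N.carrier)
    (hf : ∀ i, ∀ x ∈ M.grading i, f x ∈ N.grading i) : M.IsGradedSub (LinearMap.ker f) := by
  rw [GModule.isGradedSub_iff]
  intro i m hm
  rw [LinearMap.mem_ker] at *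
  rw [← GModule.map_pr M N f hf, hm, map_zero]

theorem GModule.IsGradedSub.map {M N : GModule A 𝒜} (f : M.carrier →ₗ[A] N.carrier)
    (hf : ∀ i, ∀ x ∈ M.grading i, f x ∈ N.grading i) {S : Submodule A M.carrier}
    (hS : M.IsGradedSub S) : N.IsGradedSub (S.map f) := by
  rw [GModule.isGradedSub_iff] at *
  rintro i _ ⟨x, hx, rfl⟩
  exact ⟨M.pr i x, hS i x hx, (GModule.map_pr M N f hf i x).symm⟩

theorem GModule.IsGradedSub.sup {M : GModule A 𝒜} {S T : Submodule A M.carrier}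
    (hS : M.IsGradedSub S) (hT : M.IsGradedSub T) : M.IsGradedSub (S ⊔ T) := by
  rw [GModule.isGradedSub_iff] at *
  intro i m hm
  obtain ⟨x, hx, y, hy, rfl⟩ := Submodule.mem_sup.1 hm
  rw [map_add]
  exact Submodule.add_mem_sup (hS i x hx) (hT i y hy)

/-- The grading on a graded submodule. -/
def GModule.subGrading (M : GModule A 𝒜) (N : Submodule A M.carrier) (i : ℤ) :
    Submodule ℂ N :=
  (M.grading i).comap (N.subtype.restrictScalars ℂ)

theorem GModule.sub_isInternal (M : GModule A 𝒜) (N : Submodule A M.carrier)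
    (hN : M.IsGradedSub N) : DirectSum.IsInternal (M.subGrading N) := by
  rw [GModule.isGradedSub_iff] at hN
  refine gm_isInternal _ (fun i => ((M.pr i).restrict (p := N.restrictScalars ℂ)
    (q := N.restrictScalars ℂ) (hN i) : N →ₗ[ℂ] N)) ?_ ?_ ?_
  · intro i x hx
    exact Subtype.ext (M.pr_same i x hx)
  · intro i j h x hx
    exact Subtype.ext (M.pr_ne i j h x hx)
  · intro x
    obtain ⟨s, hs⟩ := M.sum_pr x
    have : x = ∑ i ∈ s, (⟨M.pr i x, hN i x x.2⟩ : N) := by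
      apply Subtype.ext
      rw [AddSubmonoidClass.coe_finsetSum]
      exact hs
    rw [this]
    exact Submodule.sum_mem _ fun i _ => Submodule.mem_iSup_of_mem i (M.pr_mem i x)

/-- A graded submodule as a graded module. -/
noncomputable def GModule.sub (M : GModule A 𝒜) (N : Submodule A M.carrier)
    (hN : M.IsGradedSub N) : GModule A 𝒜 where
  carrier := N
  grading := M.subGrading N
  gsmul := ⟨fun {_ _ _ _} ha hx =>
    SetLike.GradedSMul.smul_mem (A := 𝒜) (B := M.grading) ha hx⟩
  decomp := (M.sub_isInternal N hN).chooseDecomposition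

/-- The inclusion. -/
noncomputable def GModule.incl (M : GModule A 𝒜) (N : Submodule A M.carrier)
    (hN : M.IsGradedSub N) : (M.sub N hN).carrier →ₗ[A] M.carrier := N.subtype

theorem GModule.incl_inj (M : GModule A 𝒜) (N : Submodule A M.carrier)
    (hN : M.IsGradedSub N) : Function.Injective (M.incl N hN) := Subtype.val_injective

theorem GModule.range_incl (M : GModule A 𝒜) (N : Submodule A M.carrier)
    (hN : M.IsGradedSub N) : LinearMap.range (M.incl N hN) = N := N.range_subtype

theorem GModule.incl_graded (M : GModule A 𝒜) (N : Submodule A M.carrier)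
    (hN : M.IsGradedSub N) (i : ℤ) (x) (hx : x ∈ (M.sub N hN).grading i) :
    M.incl N hN x ∈ M.grading i := hx

theorem GModule.sub_bot (M : GModule A 𝒜) (N : Submodule A M.carrier)
    (hN : M.IsGradedSub N) (i : ℤ) (h : M.grading i = ⊥) : (M.sub N hN).grading i = ⊥ := by
  rw [eq_bot_iff]
  intro x hx
  have := M.incl_graded N hN i x hx
  rw [h, Submodule.mem_bot] at this
  exact M.incl_inj N hN (this.trans (map_zero _).symm)

theorem GModule.sub_fin (M : GModule A 𝒜) (N : Submodule A M.carrier)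
    (hN : M.IsGradedSub N) (i : ℤ) (h : FiniteDimensional ℂ (M.grading i)) :
    FiniteDimensional ℂ ((M.sub N hN).grading i) := by
  let F : (M.sub N hN).grading i →ₗ[ℂ] M.grading i :=
    ((M.incl N hN).restrictScalars ℂ).restrict (M.incl_graded N hN i)
  refine FiniteDimensional.of_injective F ?_
  intro x y hxy
  have h2 : M.incl N hN x.1 = M.incl N hN y.1 :=
    congrArg (fun z : M.grading i => (z : M.carrier)) hxy
  exact Subtype.ext (M.incl_inj N hN h2)

/-- The grading on a free module with homogeneous basis in degrees `δ`. -/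
noncomputable def gfreeGrading (𝒜 : ℤ → Submodule ℂ A) {ι : Type} (δ : ι → ℤ) (i : ℤ) :
    Submodule ℂ (ι →₀ A) :=
  ⨅ j, (𝒜 (i - δ j)).comap (Finsupp.lapply j)

theorem mem_gfreeGrading {ι : Type} (δ : ι → ℤ) (i : ℤ) (f : ι →₀ A) :
    f ∈ gfreeGrading 𝒜 δ i ↔ ∀ j, f j ∈ 𝒜 (i - δ j) := by
  simp [gfreeGrading, Submodule.mem_iInf]

theorem single_mem_gfree {ι : Type} (δ : ι → ℤ) (i : ℤ) (j : ι) (a : A)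
    (ha : a ∈ 𝒜 (i - δ j)) : Finsupp.single j a ∈ gfreeGrading 𝒜 δ i := by
  classical
  rw [mem_gfreeGrading]
  intro k
  rw [Finsupp.single_apply]
  split_ifs with h
  · subst h; exact ha
  · exact zero_mem _

theorem gfree_isInternal [GradedAlgebra 𝒜] {ι : Type} (δ : ι → ℤ) :
    DirectSum.IsInternal (gfreeGrading 𝒜 δ) := by
  classical
  let π : ℤ → (ι →₀ A) →ₗ[ℂ] (ι →₀ A) := fun i =>
    Finsupp.lsum ℂ fun j => Finsupp.lsingle j ∘ₗ GradedAlgebra.proj 𝒜 (i - δ j)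
  have hπ : ∀ i f j, π i f j = GradedAlgebra.proj 𝒜 (i - δ j) (f j) := by
    intro i f j
    induction f using Finsupp.induction_linear with
    | zero => simp
    | add f g hf hg => rw [map_add, Finsupp.add_apply, hf, hg, Finsupp.add_apply, map_add]
    | single k a =>
      simp only [π, Finsupp.lsum_single, LinearMap.comp_apply, Finsupp.lsingle_apply,
        Finsupp.single_apply]
      split_ifs with h
      · rw [h]
      · simp
  refine gm_isInternal _ π ?_ ?_ ?_
  · intro i f hf
    rw [mem_gfreeGrading] at hf
    ext j
    rw [hπ, GradedAlgebra.proj_apply]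
    exact DirectSum.decompose_of_mem_same _ (hf j)
  · intro i k h f hf
    rw [mem_gfreeGrading] at hf
    ext j
    rw [hπ, GradedAlgebra.proj_apply]
    exact DirectSum.decompose_of_mem_ne _ (hf j) (by omega)
  · intro f
    induction f using Finsupp.induction_linear with
    | zero => exact zero_mem _
    | add f g hf hg => exact add_mem hf hg
    | single k a =>
      rw [← DirectSum.sum_support_decompose 𝒜 a, Finsupp.single_finsetSum]
      refine Submodule.sum_mem _ fun n _ => Submodule.mem_iSup_of_mem (n + δ k) ?_
      apply single_mem_gfree
      rw [add_sub_cancel_right]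
      exact SetLike.coe_mem _

/-- Graded free module. -/
noncomputable def gfree [GradedAlgebra 𝒜] {ι : Type} (δ : ι → ℤ) : GModule A 𝒜 where
  carrier := ι →₀ A
  grading := gfreeGrading 𝒜 δ
  gsmul := ⟨fun {i j a x} ha hx => by
    rw [mem_gfreeGrading] at *
    intro k
    have := SetLike.mul_mem_graded ha (hx k)
    rwa [← add_sub_assoc] at this⟩
  decomp := (gfree_isInternal δ).chooseDecomposition

theorem gfree_bot [GradedAlgebra 𝒜] {ι : Type} (δ : ι → ℤ) (b c : ℤ)
    (hA : ∀ i : ℤ, i < c → 𝒜 i = ⊥) (hδ : ∀ j, b ≤ δ j) (i : ℤ) (hi : i < b + c) :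
    (gfree (𝒜 := 𝒜) δ).grading i = ⊥ := by
  rw [eq_bot_iff]
  intro f hf
  have hf' := (mem_gfreeGrading δ i f).1 hf
  rw [Submodule.mem_bot]
  refine Finsupp.ext fun j => ?_
  have := hf' j
  have h2 := hδ j
  rw [hA _ (by omega), Submodule.mem_bot] at this
  exact this

theorem gfree_fin [GradedAlgebra 𝒜] {ι : Type} (δ : ι → ℤ) (c : ℤ)
    (hA : ∀ i : ℤ, i < c → 𝒜 i = ⊥) (hAfin : ∀ i, FiniteDimensional ℂ (𝒜 i))
    (hδ : ∀ n, {j | δ j ≤ n}.Finite) (i : ℤ) :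
    FiniteDimensional ℂ ((gfree (𝒜 := 𝒜) δ).grading i) := by
  classical
  let s : Finset ι := (hδ (i - c)).toFinset
  let T : Submodule ℂ (ι →₀ A) := s.sup fun j => (𝒜 (i - δ j)).map (Finsupp.lsingle j)
  have hT : FiniteDimensional ℂ T := inferInstance
  have hle : gfreeGrading 𝒜 δ i ≤ T := by
    intro f hf
    rw [mem_gfreeGrading] at hf
    rw [← Finsupp.sum_single f]
    refine Submodule.sum_mem _ fun j hj => ?_
    have hjs : j ∈ s := by
      simp only [s, Set.Finite.mem_toFinset, Set.mem_ofPred_eq]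
      by_contra h
      have := hf j
      rw [hA _ (by omega), Submodule.mem_bot] at this
      exact (Finsupp.mem_support_iff.1 hj) this
    exact (Finset.le_sup (f := fun j => (𝒜 (i - δ j)).map (Finsupp.lsingle j)) hjs)
      ⟨f j, hf j, rfl⟩
  exact @Submodule.finiteDimensional_of_le _ _ _ _ _ _ _ hT hle

/-- The map out of a graded free module. -/
noncomputable def gfree_lift [GradedAlgebra 𝒜] {ι : Type} (δ : ι → ℤ) (M : GModule A 𝒜)
    (v : ι → M.carrier) : (gfree (𝒜 := 𝒜) δ).carrier →ₗ[A] M.carrier :=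
  Finsupp.linearCombination A v

theorem gfree_lift_graded [GradedAlgebra 𝒜] {ι : Type} (δ : ι → ℤ) (M : GModule A 𝒜)
    (v : ι → M.carrier) (hv : ∀ j, v j ∈ M.grading (δ j)) (i : ℤ)
    (x) (hx : x ∈ (gfree (𝒜 := 𝒜) δ).grading i) : gfree_lift δ M v x ∈ M.grading i := by
  have hx' := (mem_gfreeGrading δ i x).1 hx
  refine Submodule.sum_mem _ fun j _ => ?_
  have := SetLike.GradedSMul.smul_mem (A := 𝒜) (B := M.grading) (hx' j) (hv j)
  rw [vadd_eq_add, sub_add_cancel] at this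
  exact this

/-- Basis element. -/
noncomputable def gfree_e [GradedAlgebra 𝒜] {ι : Type} (δ : ι → ℤ) (j : ι) :
    (gfree (𝒜 := 𝒜) δ).carrier := Finsupp.single j (1 : A)

theorem gfree_e_mem [GradedAlgebra 𝒜] {ι : Type} (δ : ι → ℤ) (j : ι) :
    gfree_e δ j ∈ (gfree (𝒜 := 𝒜) δ).grading (δ j) :=
  single_mem_gfree δ (δ j) j 1 (by rw [sub_self]; exact SetLike.one_mem_graded 𝒜)

theorem gfree_lift_e [GradedAlgebra 𝒜] {ι : Type} (δ : ι → ℤ) (M : GModule A 𝒜)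
    (v : ι → M.carrier) (j : ι) : gfree_lift δ M v (gfree_e δ j) = v j := by
  refine (Finsupp.linearCombination_single A (1 : A) j).trans (one_smul _ _)

theorem gfree_hom_ext [GradedAlgebra 𝒜] {ι : Type} (δ : ι → ℤ) {V : Type} [AddCommGroup V]
    [Module A V] (f g : (gfree (𝒜 := 𝒜) δ).carrier →ₗ[A] V)
    (h : ∀ j, f (gfree_e δ j) = g (gfree_e δ j)) : f = g := by
  refine Finsupp.lhom_ext' fun j => LinearMap.ext_ring ?_
  exact h j

theorem gfree_lift_mem [GradedAlgebra 𝒜] {ι : Type} (δ : ι → ℤ) (M : GModule A 𝒜)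
    (v : ι → M.carrier) (N : Submodule A M.carrier) (hv : ∀ j, v j ∈ N) (x) :
    gfree_lift δ M v x ∈ N :=
  Submodule.sum_mem _ fun j _ => N.smul_mem _ (hv j)

theorem gfree_projective [GradedAlgebra 𝒜] {ι : Type} (δ : ι → ℤ) :
    Module.Projective A (gfree (𝒜 := 𝒜) δ).carrier :=
  inferInstanceAs (Module.Projective A (ι →₀ A))

theorem exists_gfree_cover [GradedAlgebra 𝒜] (c : ℤ) (hA : ∀ i : ℤ, i < c → 𝒜 i = ⊥)
    (hAfin : ∀ i, FiniteDimensional ℂ (𝒜 i))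
    (M : GModule A 𝒜) (b : ℤ) (hMb : ∀ i : ℤ, i < b → M.grading i = ⊥)
    (hMfin : ∀ i, FiniteDimensional ℂ (M.grading i)) :
    ∃ (ι : Type) (δ : ι → ℤ) (g : (gfree (𝒜 := 𝒜) δ).carrier →ₗ[A] M.carrier),
      (∀ i, ∀ x ∈ (gfree (𝒜 := 𝒜) δ).grading i, g x ∈ M.grading i) ∧
      Function.Surjective g ∧
      (∀ i, i < b + c → (gfree (𝒜 := 𝒜) δ).grading i = ⊥) ∧
      (∀ i, FiniteDimensional ℂ ((gfree (𝒜 := 𝒜) δ).grading i)) := by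
  let ι : Type := Σ i : ℤ, Fin (Module.finrank ℂ (M.grading i))
  let δ : ι → ℤ := fun j => j.1
  let v : ι → M.carrier := fun j => (Module.finBasis ℂ (M.grading j.1) j.2 : M.carrier)
  have hv : ∀ j, v j ∈ M.grading (δ j) := fun j => SetLike.coe_mem _
  have hb : ∀ j, b ≤ δ j := by
    rintro ⟨i, k⟩
    by_contra h
    have h0 : Module.finrank ℂ (M.grading i) = 0 := by
      rw [hMb i (not_le.1 h)]; exact finrank_bot ℂ _
    exact (Fin.cast h0 k).elim0
  refine ⟨ι, δ, gfree_lift δ M v, gfree_lift_graded δ M v hv, ?_, gfree_bot δ b c hA hb,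
    gfree_fin δ c hA hAfin ?_⟩
  · rw [← LinearMap.range_eq_top, eq_top_iff]
    intro m _
    obtain ⟨s, hs⟩ := M.sum_pr m
    rw [hs]
    refine Submodule.sum_mem _ fun i _ => ?_
    have h1 := (Module.finBasis ℂ (M.grading i)).sum_repr ⟨M.pr i m, M.pr_mem i m⟩
    have h2 := congrArg (fun z : M.grading i => (z : M.carrier)) h1
    simp only [AddSubmonoidClass.coe_finsetSum, Submodule.coe_smul] at h2
    rw [← h2]
    refine Submodule.sum_mem _ fun k _ => ?_
    refine Submodule.smul_of_tower_mem _ _ ?_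
    exact ⟨gfree_e δ ⟨i, k⟩, gfree_lift_e δ M v ⟨i, k⟩⟩
  · intro n
    have : {j : ι | δ j ≤ n} ⊆
        ⋃ i ∈ Set.Icc b n, Set.range (fun k => (⟨i, k⟩ : ι)) := by
      rintro ⟨i, k⟩ h
      simp only [Set.mem_iUnion]
      exact ⟨i, ⟨hb ⟨i, k⟩, h⟩, k, rfl⟩
    exact ((Set.finite_Icc b n).biUnion fun i _ => Set.finite_range _).subset this

/-- Minimal graded submodule mapping onto `M`. -/
theorem exists_minimal_sub (P M : GModule A 𝒜) (g : P.carrier →ₗ[A] M.carrier)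
    (hg : ∀ i, ∀ x ∈ P.grading i, g x ∈ M.grading i) (hs : Function.Surjective g)
    (hfin : ∀ i, FiniteDimensional ℂ (P.grading i)) :
    ∃ N : Submodule A P.carrier, P.IsGradedSub N ∧ N.map g = ⊤ ∧
      ∀ N' : Submodule A P.carrier, P.IsGradedSub N' → N'.map g = ⊤ → N' ≤ N → N' = N := by
  let S : Set (Submodule A P.carrier) := {N | P.IsGradedSub N ∧ N.map g = ⊤}
  have ih : ∀ C : Set (Submodule A P.carrier), C ⊆ S → IsChain (· ≤ ·) C → ∀ y ∈ C,
      ∃ lb ∈ S, ∀ z ∈ C, lb ≤ z := by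
    intro C hCS hC y hy
    have hC' : ∀ N ∈ C, ∀ N' ∈ C, (N : Submodule A P.carrier) ≤ N' ∨
        (N' : Submodule A P.carrier) ≤ N := by
      intro N h N' h'
      exact hC.total h h'
    let I : Submodule A P.carrier := sInf (C : Set (Submodule A P.carrier))
    refine ⟨I, ⟨?_, ?_⟩, fun N hN => (sInf_le hN : I ≤ N)⟩
    · rw [GModule.isGradedSub_iff]
      intro i m hm
      rw [Submodule.mem_sInf] at hm ⊢
      exact fun N hN => (hCS hN).1 i m (hm N hN)
    · rw [eq_top_iff]
      intro m _
      obtain ⟨s, hs⟩ := M.sum_pr m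
      rw [hs]
      refine Submodule.sum_mem _ fun i _ => ?_
      let F : Submodule A P.carrier → Submodule ℂ (P.grading i) := fun N =>
        (N.restrictScalars ℂ).comap (P.grading i).subtype
      have hmono : Monotone F := fun N N' h x hx => h hx
      have hfi := hfin i
      obtain ⟨_, ⟨N, hNC, rfl⟩, hmin⟩ := WellFounded.has_min
        (wellFounded_lt (α := Submodule ℂ (P.grading i))) (F '' C) ⟨_, y, hy, rfl⟩
      obtain ⟨x, hx, hxm⟩ : M.pr i m ∈ Submodule.map g N := by
        rw [(hCS hNC).2]; trivial
      refine ⟨P.pr i x, ?_, ?_⟩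
      · change P.pr i x ∈ I
        rw [Submodule.mem_sInf]
        intro N' hN'
        have hle : F N ≤ F N' := by
          rcases hC' N hNC N' hN' with h | h
          · exact hmono h
          · have := hmin (F N') ⟨N', hN', rfl⟩
            exact (eq_of_le_of_not_lt (hmono h) this).ge
        exact hle (show (⟨P.pr i x, P.pr_mem i x⟩ : P.grading i) ∈ F N from
          (hCS hNC).1 i x hx)
      · rw [← GModule.map_pr P M g hg, hxm, M.pr_same _ _ (M.pr_mem _ _)]
  obtain ⟨N, -, hN⟩ := @zorn_le_nonempty₀ (Submodule A P.carrier)ᵒᵈ _ S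
    (fun C a b y hy => ih C a b.symm y hy)
    (⊤ : Submodule A P.carrier)
    ⟨fun _ _ _ => Submodule.mem_top, by rw [Submodule.map_top, LinearMap.range_eq_top.2 hs]⟩
  refine ⟨N, hN.1.1, hN.1.2, fun N' h1 h2 h3 => ?_⟩
  exact le_antisymm h3 (hN.2 (y := N') ⟨h1, h2⟩ h3)

/-- Existence of projective covers. -/
theorem exists_cover [GradedAlgebra 𝒜] (c : ℤ) (hA : ∀ i : ℤ, i < c → 𝒜 i = ⊥)
    (hAfin : ∀ i, FiniteDimensional ℂ (𝒜 i))
    (M : GModule A 𝒜) (b : ℤ) (hMb : ∀ i : ℤ, i < b → M.grading i = ⊥)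
    (hMfin : ∀ i, FiniteDimensional ℂ (M.grading i)) :
    ∃ (P : GModule A 𝒜) (ε : P.carrier →ₗ[A] M.carrier),
      Module.Projective A P.carrier ∧
      (∀ i, ∀ x ∈ P.grading i, ε x ∈ M.grading i) ∧
      Function.Surjective ε ∧ LinearMap.ker ε ≤ P.gradedRad ∧
      (∀ i, i < b + c → P.grading i = ⊥) ∧
      (∀ i, FiniteDimensional ℂ (P.grading i)) := by
  obtain ⟨ι, δ, g, hg, hs, hbot, hfin⟩ := exists_gfree_cover c hA hAfin M b hMb hMfin
  obtain ⟨N, hN, hNs, hmin⟩ := exists_minimal_sub _ M g hg hs hfin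
  let P := gfree (𝒜 := 𝒜) δ
  have hlift : ∀ j, ∃ w ∈ N, w ∈ P.grading (δ j) ∧ g w = g (gfree_e δ j) := by
    intro j
    obtain ⟨x, hx, hxe⟩ : g (gfree_e δ j) ∈ N.map g := by rw [hNs]; trivial
    refine ⟨P.pr (δ j) x, hN _ _ hx, P.pr_mem _ _, ?_⟩
    rw [← GModule.map_pr P M g hg, hxe, M.pr_same _ _ (hg _ _ (gfree_e_mem δ j))]
  choose w hwN hwd hwg using hlift
  let f : P.carrier →ₗ[A] P.carrier := gfree_lift δ P w
  have hfgr : ∀ i, ∀ x ∈ P.grading i, f x ∈ P.grading i := gfree_lift_graded δ P w hwd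
  have hfN : ∀ x, f x ∈ N := gfree_lift_mem δ P w N hwN
  have hgf : ∀ x, g (f x) = g x := by
    have : g ∘ₗ f = g := by
      apply gfree_hom_ext
      intro j
      rw [LinearMap.comp_apply, ← hwg]
      exact congrArg g (gfree_lift_e δ P w j)
    exact fun x => LinearMap.congr_fun this x
  have hmapf : N.map f = N := by
    apply hmin _ (GModule.IsGradedSub.map f hfgr hN)
    · rw [eq_top_iff, ← hNs]
      rintro _ ⟨x, hx, rfl⟩
      exact ⟨f x, ⟨x, hx, rfl⟩, hgf x⟩
    · rintro _ ⟨x, hx, rfl⟩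
      exact hfN x
  have hinj : ∀ x ∈ N, f x = 0 → x = 0 := by
    intro x hx h0
    apply P.ext_pr
    intro i
    have hfi := hfin i
    let Ni : Submodule ℂ P.carrier := N.restrictScalars ℂ ⊓ P.grading i
    have : FiniteDimensional ℂ Ni := Submodule.finiteDimensional_of_le inf_le_right
    let h : Ni →ₗ[ℂ] Ni := (f.restrictScalars ℂ).restrict
      (fun y hy => ⟨hfN y, hfgr i y hy.2⟩)
    have hsurj : Function.Surjective h := by
      rintro ⟨y, hyN, hyi⟩
      obtain ⟨z, hz, hzy⟩ : y ∈ N.map f := by rw [hmapf]; exact hyN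
      refine ⟨⟨P.pr i z, hN i z hz, P.pr_mem i z⟩, Subtype.ext ?_⟩
      change f (P.pr i z) = y
      rw [← GModule.map_pr P P f hfgr, hzy, P.pr_same _ _ hyi]
    have hinj := LinearMap.injective_iff_surjective.2 hsurj
    have h1 : h ⟨P.pr i x, hN i x hx, P.pr_mem i x⟩ = 0 := by
      apply Subtype.ext
      change f (P.pr i x) = 0
      rw [← GModule.map_pr P P f hfgr, h0, map_zero]
    exact congrArg Subtype.val (hinj (h1.trans (map_zero h).symm))
  have hproj : Module.Projective A N := by
    have := gfree_projective (𝒜 := 𝒜) δ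
    let fN : P.carrier →ₗ[A] N := f.codRestrict N hfN
    have hbij : Function.Bijective (fN ∘ₗ N.subtype) := by
      constructor
      · rw [← LinearMap.ker_eq_bot, LinearMap.ker_eq_bot']
        intro x hx
        exact Subtype.ext (hinj x x.2 (congrArg Subtype.val hx))
      · rintro ⟨y, hy⟩
        obtain ⟨z, hz, hzy⟩ : y ∈ N.map f := by rw [hmapf]; exact hy
        exact ⟨⟨z, hz⟩, Subtype.ext hzy⟩
    let e := LinearEquiv.ofBijective _ hbij
    refine Module.Projective.of_split (N.subtype ∘ₗ e.symm.toLinearMap) fN ?_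
    ext1 y
    exact e.apply_symm_apply y
  have hεgr : ∀ i, ∀ x ∈ (P.sub N hN).grading i, (g ∘ₗ P.incl N hN) x ∈ M.grading i :=
    fun i x hx => hg i _ (P.incl_graded N hN i x hx)
  refine ⟨P.sub N hN, g ∘ₗ P.incl N hN, hproj, hεgr, ?_, ?_,
    fun i hi => P.sub_bot N hN i (hbot i hi), fun i => P.sub_fin N hN i (hfin i)⟩
  · intro m
    obtain ⟨x, hx, hxm⟩ : m ∈ N.map g := by rw [hNs]; trivial
    exact ⟨⟨x, hx⟩, hxm⟩
  · refine le_sInf ?_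
    rintro N' ⟨hN'g, hN'ne, hN'max⟩
    rcases hN'max _ (hN'g.sup (GModule.IsGradedSub.ker _ hεgr)) le_sup_left with h | h
    · rw [← h]; exact le_sup_right
    · exfalso
      apply hN'ne
      have h1 : N'.map (P.incl N hN) = N := by
        apply hmin _ (GModule.IsGradedSub.map _ (P.incl_graded N hN) hN'g)
        · rw [eq_top_iff, ← hNs]
          rintro _ ⟨x, hx, rfl⟩
          let x' : (P.sub N hN).carrier := (⟨x, hx⟩ : N)
          have hx' : x' ∈ N' ⊔ LinearMap.ker (g ∘ₗ P.incl N hN) := by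
            rw [h]; exact Submodule.mem_top
          obtain ⟨y, hy, z, hz, hyz⟩ := Submodule.mem_sup.1 hx'
          refine ⟨_, ⟨y, hy, rfl⟩, ?_⟩
          have h3 : (g ∘ₗ P.incl N hN) (y + z) = g x := by rw [hyz]; rfl
          rw [map_add, LinearMap.mem_ker.1 hz, add_zero] at h3
          exact h3
        · exact (LinearMap.map_le_range).trans (P.range_incl N hN).le
      rw [eq_top_iff]
      intro x _
      obtain ⟨y, hy, hyx⟩ : P.incl N hN x ∈ N'.map (P.incl N hN) := by
        rw [h1]; exact x.2
      rwa [← P.incl_inj N hN hyx]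

/-- if `𝒜 i = 0` for `i < c` with finite-dimensional pieces, and `M`
is a graded module with `M^i = 0` for `i < b` and finite-dimensional pieces, then
`M` admits a minimal graded projective resolution `⋯ → P₁ → P₀ → M → 0` whose
`k`-th term satisfies `P_k^i = 0` for `i < b + (k+1)·c` and has finite-dimensional
graded pieces. -/
theorem stmt2 (c : ℤ) (hA : ∀ i : ℤ, i < c → 𝒜 i = ⊥)
    (hAfin : ∀ i, FiniteDimensional ℂ (𝒜 i)) [GradedAlgebra 𝒜]
    (M : GModule A 𝒜) (b : ℤ) (hMb : ∀ i : ℤ, i < b → M.grading i = ⊥)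
    (hMfin : ∀ i, FiniteDimensional ℂ (M.grading i)) :
    ∃ (P : ℕ → GModule A 𝒜)
      (d : ∀ k : ℕ, (P (k + 1)).carrier →ₗ[A] (P k).carrier)
      (ε : (P 0).carrier →ₗ[A] M.carrier),
      -- each term is projective
      (∀ k, Module.Projective A (P k).carrier) ∧
      -- the maps are graded of degree zero
      (∀ k i, ∀ x ∈ (P (k + 1)).grading i, d k x ∈ (P k).grading i) ∧
      (∀ i, ∀ x ∈ (P 0).grading i, ε x ∈ M.grading i) ∧
      -- it is a resolution of `M`
      Function.Surjective ε ∧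
      LinearMap.range (d 0) = LinearMap.ker ε ∧
      (∀ k, LinearMap.range (d (k + 1)) = LinearMap.ker (d k)) ∧
      -- minimality
      LinearMap.ker ε ≤ (P 0).gradedRad ∧
      (∀ k, LinearMap.range (d k) ≤ (P k).gradedRad) ∧
      -- degree bound and local finiteness
      (∀ (k : ℕ) (i : ℤ), i < b + (k + 1) * c → (P k).grading i = ⊥) ∧
      (∀ k i, FiniteDimensional ℂ ((P k).grading i)) := by
  classical
  let T : Type 1 := {x : GModule A 𝒜 × ℤ // (∀ i : ℤ, i < x.2 → x.1.grading i = ⊥) ∧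
    ∀ i, FiniteDimensional ℂ (x.1.grading i)}
  have step : ∀ x : T, ∃ (P : GModule A 𝒜) (K : T) (ε : P.carrier →ₗ[A] x.1.1.carrier)
      (j : K.1.1.carrier →ₗ[A] P.carrier),
      Module.Projective A P.carrier ∧
      (∀ i, ∀ y ∈ P.grading i, ε y ∈ x.1.1.grading i) ∧
      (∀ i, ∀ y ∈ K.1.1.grading i, j y ∈ P.grading i) ∧
      Function.Surjective ε ∧ Function.Injective j ∧
      LinearMap.range j = LinearMap.ker ε ∧
      LinearMap.ker ε ≤ P.gradedRad ∧
      (∀ i, i < x.1.2 + c → P.grading i = ⊥) ∧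
      (∀ i, FiniteDimensional ℂ (P.grading i)) ∧ K.1.2 = x.1.2 + c := by
    rintro ⟨⟨M, b⟩, hb, hf⟩
    obtain ⟨P, ε, h1, h2, h3, h4, h5, h6⟩ := exists_cover c hA hAfin M b hb hf
    have hk : P.IsGradedSub (LinearMap.ker ε) := GModule.IsGradedSub.ker ε h2
    exact ⟨P, ⟨⟨P.sub _ hk, b + c⟩, fun i hi => P.sub_bot _ hk i (h5 i hi),
      fun i => P.sub_fin _ hk i (h6 i)⟩, ε, P.incl _ hk, h1, h2, P.incl_graded _ hk, h3,
      P.incl_inj _ hk, P.range_incl _ hk, h4, h5, h6, rfl⟩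
  choose P K ε j h1 h2 h3 h4 h5 h6 h7 h8 h9 h10 using step
  let x0 : T := ⟨⟨M, b⟩, hMb, hMfin⟩
  let X : ℕ → T := fun k => Nat.rec x0 (fun _ x => K x) k
  have hX : ∀ k : ℕ, (X k).1.2 = b + k * c := by
    intro k
    induction k with
    | zero => change b = _; simp
    | succ k ih =>
      change (K (X k)).1.2 = _
      rw [h10, ih]; push_cast; ring
  have hr : ∀ k, LinearMap.range (j (X k) ∘ₗ ε (X (k + 1))) = LinearMap.ker (ε (X k)) := by
    intro k
    rw [← h6 (X k)]
    exact LinearMap.range_comp_of_range_eq_top _ (LinearMap.range_eq_top.2 (h4 (X (k + 1))))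
  refine ⟨fun k => P (X k), fun k => j (X k) ∘ₗ ε (X (k + 1)), ε (X 0), fun k => h1 _,
    fun k i x hx => h3 _ i _ (h2 _ i _ hx), h2 (X 0), h4 (X 0), hr 0, ?_, h7 _, ?_, ?_,
    fun k => h9 _⟩
  · intro k
    rw [hr (k + 1)]
    exact (LinearMap.ker_comp_of_ker_eq_bot _ (LinearMap.ker_eq_bot.2 (h5 (X k)))).symm
  · intro k
    rw [hr k]; exact h7 _
  · intro k i hi
    apply h8
    rw [hX]
    linarith
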